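/- Let (G,κ) be a capacitated graph with κ(x) ≤ d_G(x) for all x, with X, Y, Z defined as above and X ∪ Z independent. If every DP-Nash subgraph of (G,κ) has D-set equal to X ∪ Z, then for every vertex y ∈ Y one has |N_G(y) ∩ X| ≥ κ(y) + 1. -/

import Mathlib

open Finset
open scoped Classical

noncomputable section

variable {V : Type*} [Fintype V]

/-- Degree of a vertex in a (simple) graph on a finite vertex set. -/
def deg (H : SimpleGraph V) (x : V) : ℕ :=
  (Finset.univ.filter fun y => H.Adj x y).card

/-- `(D, P; H)` is a DP-Nash subgraph of the capacitated graph `(G, κ)`: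
`H` is a spanning subgraph of `G`, bipartite with partite sets `D` and `P`,
no vertex of `P` is isolated in `H`, and every `x ∈ D` has
`H`-degree `min (d_G x) (κ x)`. -/
def IsDPNash (G : SimpleGraph V) (κ : V → ℕ) (D P : Finset V) (H : SimpleGraph V) : Prop :=
  H ≤ G ∧ D ∪ P = Finset.univ ∧ Disjoint D P ∧
    (∀ ⦃u v⦄, H.Adj u v → (u ∈ D ∧ v ∈ P) ∨ (u ∈ P ∧ v ∈ D)) ∧
    (∀ v ∈ P, 0 < deg H v) ∧
    (∀ x ∈ D, deg H x = min (deg G x) (κ x))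

/-- `X = {x : κ(x) = d_G(x)}`. -/
def XX (G : SimpleGraph V) (κ : V → ℕ) : Finset V :=
  Finset.univ.filter fun x => κ x = deg G x

/-- `Y = N(X) \ X`. -/
def YY (G : SimpleGraph V) (κ : V → ℕ) : Finset V :=
  Finset.univ.filter fun y => y ∉ XX G κ ∧ ∃ x ∈ XX G κ, G.Adj x y

/-- `Z = V \ (X ∪ Y)`. -/
def ZZ (G : SimpleGraph V) (κ : V → ℕ) : Finset V :=
  Finset.univ \ (XX G κ ∪ YY G κ)

/-- `Y^{κ>0} = {y ∈ Y : κ(y) > 0}`. -/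
def Ypos (G : SimpleGraph V) (κ : V → ℕ) : Finset V :=
  (YY G κ).filter fun y => 0 < κ y

/-- The neighbours of `x` in `G` lying in `W`. -/
def nbrW (G : SimpleGraph V) (x : V) (W : Finset V) : Finset V :=
  Finset.univ.filter fun y => G.Adj x y ∧ y ∈ W

/-- `L(W) = {x ∈ X ∪ Z : |N_G(x) ∩ W| > d_G(x) - κ(x)}`. -/
def LL (G : SimpleGraph V) (κ : V → ℕ) (W : Finset V) : Finset V :=
  (XX G κ ∪ ZZ G κ).filter fun x => deg G x - κ x < (nbrW G x W).card

/-! Vertices are put into the `D`-side greedily, one at a time, each new one dominating exactly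
`κ` of its neighbours outside the current `D`. This may continue as long as every vertex `u` that
is neither in `D` nor dominated yet has at least `κ u` neighbours outside `D`; call `u` critical
if it has exactly `κ u` of them. Putting `v` into `D` costs each of its neighbours one vertex to
dominate, so it is possible as soon as `v` can dominate all its critical neighbours, that is, if
there are at most `κ v` of them. A critical `v` always qualifies, since only its `κ v` neighbours
outside `D` matter, and if no vertex is critical then every `v` qualifies; hence the process never
gets stuck. At the very start the critical vertices are those of `X`, so a vertex `y` with
`|N(y) ∩ X| ≤ κ y` may be put into `D` first. -/

section Neighbours

variable {G H K : SimpleGraph V} {W : Finset V} {u v w : V}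

lemma mem_nbrW : w ∈ nbrW G u W ↔ G.Adj u w ∧ w ∈ W := by
  simp only [nbrW, mem_filter_univ]

lemma deg_mono (hHK : H ≤ K) (u : V) : deg H u ≤ deg K u :=
  card_le_card (monotone_filter_right _ fun _ _ huw ↦ hHK huw)

lemma deg_eq_zero_iff : deg H u = 0 ↔ ∀ w, ¬ H.Adj u w := by
  simp only [deg, card_eq_zero, filter_eq_empty_iff, mem_univ, true_imp_iff]

lemma deg_eq_card (h : ∀ w, H.Adj u w ↔ w ∈ W) : deg H u = #W :=
  congrArg card (by ext w; simp only [mem_filter_univ, h])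

lemma deg_congr (h : ∀ w, H.Adj u w ↔ K.Adj u w) : deg H u = deg K u :=
  deg_eq_card fun w ↦ by rw [h, mem_filter_univ]

lemma card_nbrW_univ : #(nbrW G u univ) = deg G u := by
  simp only [nbrW, deg, mem_univ, and_true]

lemma nbrW_erase : nbrW G u (W.erase v) = (nbrW G u W).erase v := by
  ext w
  simp only [mem_nbrW, mem_erase]
  tauto

end Neighbours

lemma sup_between_singleton_adj {α : Type*} {G H : SimpleGraph α} {T : Finset α} {v a b : α}
    (hT : ∀ w ∈ T, G.Adj v w) :
    (H ⊔ G.between {v} T).Adj a b ↔ H.Adj a b ∨ a = v ∧ b ∈ T ∨ a ∈ T ∧ b = v := by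
  simp only [SimpleGraph.sup_adj, SimpleGraph.between_adj, Set.mem_singleton_iff, mem_coe]
  grind [SimpleGraph.adj_comm]

/-- A stage of the greedy construction of a DP-Nash subgraph: `D` is the set of vertices chosen so
far, `H` consists of the edges along which they dominate, and every vertex outside `D` that is not
dominated (that is, isolated in `H`) still has enough neighbours outside `D` to be chosen later. -/
structure IsPartialDPNash (G : SimpleGraph V) (κ : V → ℕ) (D : Finset V) (H : SimpleGraph V) :
    Prop where
  le : H ≤ G
  mem_iff_notMem_of_adj : ∀ ⦃u v⦄, H.Adj u v → (u ∈ D ↔ v ∉ D)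
  deg_eq : ∀ x ∈ D, deg H x = κ x
  le_card_nbrW : ∀ u ∉ D, deg H u = 0 → κ u ≤ #(nbrW G u Dᶜ)

/-- The critical vertices of a stage `(D, H)` of the greedy construction: those neither chosen nor
dominated whose number of neighbours outside `D` is exactly their capacity, so that they cannot
lose any of them. -/
def criticalSet (G : SimpleGraph V) (κ : V → ℕ) (D : Finset V) (H : SimpleGraph V) : Finset V :=
  univ.filter fun u ↦ u ∉ D ∧ deg H u = 0 ∧ κ u = #(nbrW G u Dᶜ)

section Greedy

variable {G H : SimpleGraph V} {κ : V → ℕ} {D T : Finset V} {u v : V}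

lemma mem_criticalSet :
    u ∈ criticalSet G κ D H ↔ u ∉ D ∧ deg H u = 0 ∧ κ u = #(nbrW G u Dᶜ) := by
  simp only [criticalSet, mem_filter_univ]

lemma nbrW_criticalSet_subset : nbrW G v (criticalSet G κ D H) ⊆ nbrW G v Dᶜ := fun _ hu ↦
  have ⟨hvu, hcrit⟩ := mem_nbrW.1 hu
  mem_nbrW.2 ⟨hvu, mem_compl.2 (mem_criticalSet.1 hcrit).1⟩

lemma criticalSet_empty_bot : criticalSet G κ ∅ ⊥ = XX G κ := by
  ext u
  simp [mem_criticalSet, XX, deg_eq_zero_iff, card_nbrW_univ]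

lemma isPartialDPNash_empty_bot (hκ : ∀ u, κ u ≤ deg G u) : IsPartialDPNash G κ ∅ ⊥ where
  le := bot_le
  mem_iff_notMem_of_adj _ _ h := h.elim
  deg_eq x hx := absurd hx (notMem_empty x)
  le_card_nbrW u _ _ := by simpa only [compl_empty, card_nbrW_univ] using hκ u

namespace IsPartialDPNash

lemma isDPNash (h : IsPartialDPNash G κ D H) (hdom : ∀ u ∉ D, deg H u ≠ 0) :
    IsDPNash G κ D Dᶜ H := by
  refine ⟨h.le, union_compl D, disjoint_compl_right, fun u v huv ↦ ?_, fun u hu ↦ ?_,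
    fun x hx ↦ ?_⟩
  · have hside := h.mem_iff_notMem_of_adj huv
    simp only [mem_compl]
    tauto
  · exact Nat.pos_of_ne_zero (hdom u (mem_compl.1 hu))
  · rw [h.deg_eq x hx, min_eq_right]
    exact h.deg_eq x hx ▸ deg_mono h.le x

lemma le_card_nbrW_insert (h : IsPartialDPNash G κ D H) (hu : u ∉ D) (hu₀ : deg H u = 0)
    (hcrit : G.Adj u v → u ∉ criticalSet G κ D H) : κ u ≤ #(nbrW G u (insert v D)ᶜ) := by
  rw [compl_insert, nbrW_erase]
  have hle := h.le_card_nbrW u hu hu₀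
  by_cases hv : v ∈ nbrW G u Dᶜ
  · have hne : κ u ≠ #(nbrW G u Dᶜ) := fun heq ↦
      hcrit (mem_nbrW.1 hv).1 (mem_criticalSet.2 ⟨hu, hu₀, heq⟩)
    rw [card_erase_of_mem hv]
    omega
  · rwa [erase_eq_of_notMem hv]

lemma insert_sup_between (h : IsPartialDPNash G κ D H) (hv : v ∉ D) (hv₀ : deg H v = 0)
    (hcrit : nbrW G v (criticalSet G κ D H) ⊆ T) (hT : T ⊆ nbrW G v Dᶜ) (hTcard : #T = κ v) :
    IsPartialDPNash G κ (insert v D) (H ⊔ G.between {v} T) := by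
  have hvT (w) (hw : w ∈ T) : G.Adj v w := (mem_nbrW.1 (hT hw)).1
  have hTD (w) (hw : w ∈ T) : w ∉ D := mem_compl.1 (mem_nbrW.1 (hT hw)).2
  have hv_notMem : v ∉ T := fun hv' ↦ (hvT v hv').ne rfl
  have hv_isolated : ∀ w, ¬ H.Adj v w := deg_eq_zero_iff.1 hv₀
  have hadj (a b) := sup_between_singleton_adj (H := H) (a := a) (b := b) hvT
  refine ⟨sup_le h.le SimpleGraph.between_le, fun a b hab ↦ ?_, fun x hx ↦ ?_, fun u hu hu₀ ↦ ?_⟩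
  · have hH := h.mem_iff_notMem_of_adj (u := a) (v := b)
    grind [SimpleGraph.adj_comm]
  · obtain rfl | hxD := mem_insert.1 hx
    · rw [← hTcard]
      exact deg_eq_card fun w ↦ by grind
    · rw [← h.deg_eq x hxD]
      exact deg_congr fun w ↦ by grind
  · have huD : u ∉ D := notMem_mono (subset_insert v D) hu
    have huT : u ∉ T := fun huT ↦
      deg_eq_zero_iff.1 hu₀ v ((hadj u v).2 (Or.inr (Or.inr ⟨huT, rfl⟩)))
    have huH : deg H u = 0 := Nat.eq_zero_of_le_zero (hu₀ ▸ deg_mono le_sup_left u)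
    exact h.le_card_nbrW_insert huD huH fun huv hu' ↦ huT (hcrit (mem_nbrW.2 ⟨huv.symm, hu'⟩))

lemma exists_insert_of_card_nbrW_le (h : IsPartialDPNash G κ D H) (hv : v ∉ D)
    (hv₀ : deg H v = 0) (hcard : #(nbrW G v (criticalSet G κ D H)) ≤ κ v) :
    ∃ H', IsPartialDPNash G κ (insert v D) H' := by
  obtain ⟨T, hcrit, hT, hTcard⟩ :=
    exists_subsuperset_card_eq nbrW_criticalSet_subset hcard (h.le_card_nbrW v hv hv₀)
  exact ⟨_, h.insert_sup_between hv hv₀ hcrit hT hTcard⟩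

lemma exists_insert (h : IsPartialDPNash G κ D H) (hv : v ∉ D) (hv₀ : deg H v = 0) :
    ∃ w ∉ D, ∃ H', IsPartialDPNash G κ (insert w D) H' := by
  obtain hempty | ⟨w, hw⟩ := (criticalSet G κ D H).eq_empty_or_nonempty
  · exact ⟨v, hv, h.exists_insert_of_card_nbrW_le hv hv₀ (by simp [hempty, nbrW])⟩
  · obtain ⟨hwD, hw₀, hwκ⟩ := mem_criticalSet.1 hw
    exact ⟨w, hwD, h.exists_insert_of_card_nbrW_le hwD hw₀
      (hwκ ▸ card_le_card nbrW_criticalSet_subset)⟩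

lemma exists_superset_isDPNash (h : IsPartialDPNash G κ D H) :
    ∃ D' ⊇ D, ∃ H', IsDPNash G κ D' D'ᶜ H' := by
  obtain ⟨D', hDD', hmax⟩ :=
    (Set.toFinite {E | ∃ K, IsPartialDPNash G κ E K}).exists_le_maximal ⟨H, h⟩
  obtain ⟨H', h'⟩ := hmax.prop
  refine ⟨D', hDD', H', h'.isDPNash fun v hv hv₀ ↦ ?_⟩
  obtain ⟨w, hw, hinsert⟩ := h'.exists_insert hv hv₀
  exact hw (hmax.le_of_ge hinsert (subset_insert w D') (mem_insert_self w D'))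

end IsPartialDPNash

theorem exists_isDPNash_mem (hκ : ∀ u, κ u ≤ deg G u) (hv : #(nbrW G v (XX G κ)) ≤ κ v) :
    ∃ D P H, IsDPNash G κ D P H ∧ v ∈ D := by
  obtain ⟨H₁, h₁⟩ := (isPartialDPNash_empty_bot hκ).exists_insert_of_card_nbrW_le
    (notMem_empty v) (deg_eq_zero_iff.2 fun _ ↦ id) (by rwa [criticalSet_empty_bot])
  obtain ⟨D, hD, H, h⟩ := h₁.exists_superset_isDPNash
  exact ⟨D, Dᶜ, H, h, hD (mem_insert_self v ∅)⟩

lemma notMem_XX_union_ZZ (hv : v ∈ YY G κ) : v ∉ XX G κ ∪ ZZ G κ := by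
  have hvX : v ∉ XX G κ := (mem_filter.1 hv).2.1
  simp [ZZ, hv, hvX]

end Greedy

/-- If every DP-Nash subgraph of `(G,κ)` has `D`-set `X ∪ Z`, then every
`y ∈ Y` satisfies `|N_G(y) ∩ X| ≥ κ y + 1`. -/
theorem stmt6 (G : SimpleGraph V) (κ : V → ℕ) (hκ : ∀ v, κ v ≤ deg G v)
    (hedge : ∀ u v, G.Adj u v → 0 < κ u ∨ 0 < κ v)
    (hind : ∀ u ∈ XX G κ ∪ ZZ G κ, ∀ v ∈ XX G κ ∪ ZZ G κ, ¬ G.Adj u v)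
    (huniq : ∀ (D P : Finset V) (H : SimpleGraph V),
      IsDPNash G κ D P H → D = XX G κ ∪ ZZ G κ) :
    ∀ y ∈ YY G κ, κ y + 1 ≤ (nbrW G y (XX G κ)).card := by
  intro y hy
  by_contra! hlt
  obtain ⟨D, P, H, h, hyD⟩ := exists_isDPNash_mem hκ (Nat.le_of_lt_succ hlt)
  exact notMem_XX_union_ZZ hy (huniq D P H h ▸ hyD)
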